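/- Let Ω ⊆ ℝⁿ be an open domain, let M be an N-function satisfying condition (M) and such that M(λ)/λ² is nondecreasing, and let μ satisfy condition (μ). Assume that there are constants K₁, K₂ > 0 such that for every u ∈ C₀^∞(Ω): ∫_Ω M(|∇φ|·|u|) dμ ≤ K₁·∫_Ω M(|∇u|) dμ + K₂·∫_Ω M(|u|) dμ. Then there exist constants C₁, C₂ > 0 such that for every θ ∈ (0,1] and every u ∈ C₀^∞(Ω): ∫_Ω M(|∇u|) dμ ≤ C₁·∫_Ω M(θ·|∇⁽²⁾u|) dμ + C₂·∫_Ω M(|u|/θ) dμ. -/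

import Mathlib

open MeasureTheory Filter Set

noncomputable section

/-- `E n` is the Euclidean space `ℝⁿ`. -/
abbrev E (n : ℕ) := EuclideanSpace ℝ (Fin n)

/-- An `N`-function: a continuous convex function `M : [0,∞) → [0,∞)` with `M(0) = 0`,
`lim_{λ→0} M(λ)/λ = 0` and `lim_{λ→∞} λ/M(λ) = 0`. -/
def IsNFunction (M : ℝ → ℝ) : Prop :=
  ContinuousOn M (Ici 0) ∧ ConvexOn ℝ (Ici 0) M ∧ M 0 = 0 ∧
  (∀ x ≥ (0:ℝ), 0 ≤ M x) ∧
  Tendsto (fun l => M l / l) (nhdsWithin 0 (Ioi 0)) (nhds 0) ∧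
  Tendsto (fun l => l / M l) atTop (nhds 0)

/-- The Δ₂-condition. -/
def Delta2 (M : ℝ → ℝ) : Prop := ∃ c > 0, ∀ l > (0:ℝ), M (2 * l) ≤ c * M l

/-- Condition (M): `M` is an `N`-function of class `C¹` on `(0,∞)` satisfying the
Δ₂-condition and such that `M'(λ)/λ` is bounded near zero. -/
def CondM (M : ℝ → ℝ) : Prop :=
  IsNFunction M ∧ ContDiffOn ℝ 1 M (Ioi 0) ∧ Delta2 M ∧
  ∃ ε > (0:ℝ), ∃ C : ℝ, ∀ l ∈ Ioo (0:ℝ) ε, deriv M l / l ≤ C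

/-- Condition (Y): `P, Q` are nonnegative nondecreasing measurable functions vanishing at `0`
such that the Young-type inequality `(M(u)/u²)·v·w ≤ M(u) + P(v) + Q(w)` holds. -/
def CondY (M P Q : ℝ → ℝ) : Prop :=
  Measurable P ∧ Measurable Q ∧ (∀ x ≥ (0:ℝ), 0 ≤ P x) ∧ (∀ x ≥ (0:ℝ), 0 ≤ Q x) ∧
  MonotoneOn P (Ici 0) ∧ MonotoneOn Q (Ici 0) ∧ P 0 = 0 ∧ Q 0 = 0 ∧
  ∀ u > (0:ℝ), ∀ v > (0:ℝ), ∀ w > (0:ℝ), M u / u ^ 2 * v * w ≤ M u + P v + Q w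

/-- `φ` is locally Lipschitz on `Ω`. -/
def LocLipschitzOn {α : Type*} [MetricSpace α] (Ω : Set α) (φ : α → ℝ) : Prop :=
  ∀ x ∈ Ω, ∃ s ∈ nhdsWithin x Ω, ∃ K : NNReal, LipschitzOnWith K φ s

/-- The measure `μ(dx) = e^{-φ(x)} dx` on the domain `Ω`. -/
def measOf {n : ℕ} (Ω : Set (E n)) (φ : E n → ℝ) : Measure (E n) :=
  (volume.restrict Ω).withDensity fun x => ENNReal.ofReal (Real.exp (-φ x))

/-- `u ∈ C₀^∞(Ω)`: smooth and compactly supported inside `Ω`. -/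
def TestFun {n : ℕ} (Ω : Set (E n)) (u : E n → ℝ) : Prop :=
  ContDiff ℝ (⊤ : ℕ∞) u ∧ HasCompactSupport u ∧ tsupport u ⊆ Ω

/-- The Hilbert–Schmidt norm of the Hessian of `u` at `x`. -/
def hessNormHS {n : ℕ} (u : E n → ℝ) (x : E n) : ℝ :=
  Real.sqrt (∑ i : Fin n, ∑ j : Fin n,
    (iteratedFDeriv ℝ 2 u x ![EuclideanSpace.single i (1:ℝ), EuclideanSpace.single j (1:ℝ)]) ^ 2)

/-- The Luxemburg norm `‖f‖_{L^R(μ)} = inf {K > 0 : ∫ R(|f|/K) dμ ≤ 1}`. -/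
def luxNorm {α : Type*} [MeasurableSpace α] (R : ℝ → ℝ) (μ : Measure α) (f : α → ℝ) : ℝ :=
  sInf {K : ℝ | 0 < K ∧ ∫ x, R (|f x| / K) ∂μ ≤ 1}

/-!
Write `h(λ) = M(λ)/λ²`, a nondecreasing function extended to `λ = 0` by its limit. The vector field
`A(ξ) = h(|ξ|) ξ` is everywhere differentiable with `|DA(ξ)| ≤ (D + 1) h(|ξ|)`, by `Δ₂` and convexity
(`exists_profile`, `field_hasFDerivAt`), so `A(∇u) e^{-φ}` is Lipschitz with compact support. Since
`M(|∇u|) = A(∇u) · ∇u`, integrating by parts coordinatewise (`partial_ibp`) bounds `∫ M(|∇u|) dμ` by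
the sum over `i` of `∫ h(|∇u|) ((D + 1) |∇⁽²⁾u| + |∂ᵢu| |∇φ|) |u| dμ`.

The Young-type inequality `h(a) v w ≤ ε M(a) + C (M(v) + M(w))` (`young_profile`), applied with
`w = |u|/(δθ)`, reduces this to `∫ M(|∇u|) dμ` with a small factor, the modulars of `δθ |∇⁽²⁾u|` and
`|u|/(δθ)`, and `∫ M(|∇φ| |δθ ∂ᵢu|) dμ`. The last integral is estimated by the Hardy inequality for
the test function `δθ ∂ᵢu`, which gives back `∫ M(δθ |∇⁽²⁾u|) dμ` and `∫ M(δθ |∇u|) dμ`; the latter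
is at most `δ ∫ M(|∇u|) dμ`. For `ε` and then `δ` small, independently of `θ` and `u`, all the
occurrences of `∫ M(|∇u|) dμ` on the right are absorbed, and `Δ₂` removes `δ` from `M(|u|/(δθ))`.
-/

/-! ### The profile of an N-function -/

/-- The profile `h(λ) = M(λ)/λ²` of `M`, extended to `λ = 0` by its limit there (which exists since
`M(λ)/λ²` is nondecreasing), with the properties used below. The constant `D` comes from `Δ₂`. -/
lemma exists_profile {M : ℝ → ℝ} (hM : CondM M)
    (hmono : MonotoneOn (fun l => M l / l ^ 2) (Ioi 0)) :
    ∃ h : ℝ → ℝ, ∃ D : ℝ, 0 ≤ D ∧ MonotoneOn h (Ici 0) ∧ (∀ x ≥ 0, 0 ≤ h x) ∧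
      (∀ x ≥ 0, M x = h x * x ^ 2) ∧ Tendsto h (nhdsWithin 0 (Ioi 0)) (nhds (h 0)) ∧
      ∀ l > 0, ∃ h', HasDerivAt h h' l ∧ l * |h'| ≤ D * h l := by
  obtain ⟨⟨-, hconv, hM0, hMnn, -, -⟩, hC1, ⟨c, hc, hΔ⟩, -⟩ := hM
  set k : ℝ → ℝ := fun l => M l / l ^ 2 with hk
  have hknn : ∀ x > 0, 0 ≤ k x := fun x hx => div_nonneg (hMnn x hx.le) (sq_nonneg x)
  have hbdd : BddBelow (k '' Ioi 0) := ⟨0, by rintro _ ⟨x, hx, rfl⟩; exact hknn x hx⟩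
  have hne : (k '' Ioi 0).Nonempty := ⟨k 1, 1, by simp, rfl⟩
  set c0 := sInf (k '' Ioi 0) with hc0
  have hc0nn : 0 ≤ c0 := le_csInf hne (by rintro _ ⟨x, hx, rfl⟩; exact hknn x hx)
  set h : ℝ → ℝ := fun l => if l = 0 then c0 else k l with hh
  have hpos : ∀ x > 0, h x = k x := fun x hx => by simp [hh, hx.ne']
  have h0 : h 0 = c0 := by simp [hh]
  have hmon : MonotoneOn h (Ici 0) := by
    intro x hx y hy hxy
    rcases (mem_Ici.1 hx).eq_or_lt with rfl | hx0
    · rcases (mem_Ici.1 hy).eq_or_lt with rfl | hy0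
      · exact le_rfl
      · rw [h0, hpos y hy0]
        exact csInf_le hbdd ⟨y, hy0, rfl⟩
    · rw [hpos x hx0, hpos y (hx0.trans_le hxy)]
      exact hmono hx0 (hx0.trans_le hxy) hxy
  have hnn : ∀ x ≥ 0, 0 ≤ h x := fun x hx =>
    (h0 ▸ hc0nn : 0 ≤ h 0).trans (hmon (mem_Ici.2 le_rfl) hx hx)
  have hMh : ∀ x ≥ 0, M x = h x * x ^ 2 := by
    intro x hx
    rcases hx.eq_or_lt with rfl | hx0
    · simp [hM0]
    · rw [hpos x hx0, hk]; field_simp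
  refine ⟨h, c + 2, by linarith, hmon, hnn, hMh, ?_, ?_⟩
  · rw [h0]
    have := MonotoneOn.tendsto_nhdsGT (f := k) (x := (0:ℝ)) hmono hbdd
    refine this.congr' ?_
    filter_upwards [self_mem_nhdsWithin] with x hx
    exact (hpos x hx).symm
  · intro l hl
    have hd : HasDerivAt M (deriv M l) l :=
      ((hC1.differentiableOn (by norm_num)).differentiableAt (Ioi_mem_nhds hl)).hasDerivAt
    have hMmono : MonotoneOn M (Ici 0) := by
      intro x hx y hy hxy
      rw [hMh x hx, hMh y hy]
      exact mul_le_mul (hmon hx hy hxy) (pow_le_pow_left₀ hx hxy 2) (sq_nonneg _) (hnn y hy)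
    have hd0 : 0 ≤ deriv M l := by
      have h1 := hMmono.derivWithin_nonneg (x := l)
      rwa [derivWithin_of_mem_nhds (Ici_mem_nhds hl)] at h1
    -- The tangent line at `l` lies below `M` at `2 * l`.
    have hd1 : deriv M l * l ≤ c * M l := by
      have h1 := hconv.le_slope_of_hasDerivAt (x := l) (y := 2 * l) (mem_Ici.2 hl.le)
        (mem_Ici.2 (by linarith)) (by linarith) hd
      rw [slope_def_field, le_div_iff₀ (by linarith)] at h1
      have := hΔ l hl
      have := hMnn l hl.le
      nlinarith
    have hkd : HasDerivAt k ((deriv M l * l ^ 2 - M l * (2 * l)) / (l ^ 2) ^ 2) l := by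
      have := hd.div (hasDerivAt_pow 2 l) (by positivity)
      rw [show k = M / fun x => x ^ 2 from rfl]
      simpa using this
    refine ⟨_, hkd.congr_of_eventuallyEq ?_, ?_⟩
    · filter_upwards [Ioi_mem_nhds hl] with x hx using hpos x hx
    · have e : l * |(deriv M l * l ^ 2 - M l * (2 * l)) / (l ^ 2) ^ 2|
          = |deriv M l * l - 2 * M l| / l ^ 2 := by
        rw [abs_div, abs_of_pos (by positivity : (0:ℝ) < (l ^ 2) ^ 2),
          show deriv M l * l ^ 2 - M l * (2 * l) = l * (deriv M l * l - 2 * M l) by ring,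
          abs_mul, abs_of_pos hl]
        field_simp
      rw [e, hpos l hl, hk, ← mul_div_assoc]
      gcongr
      have := hMnn l hl.le
      have : 0 ≤ deriv M l * l := by positivity
      rw [abs_le]; constructor <;> nlinarith

/-- The vector field `A(ξ) = h(|ξ|) ξ` is differentiable everywhere (also at the origin, where its
derivative is `h(0) • id`), with derivative controlled by the profile `h` itself. -/
lemma field_hasFDerivAt {F : Type*} [NormedAddCommGroup F] [InnerProductSpace ℝ F]
    {h : ℝ → ℝ} {D : ℝ} (hD : 0 ≤ D) (hnn : ∀ x ≥ 0, 0 ≤ h x)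
    (h0 : Tendsto h (nhdsWithin 0 (Ioi 0)) (nhds (h 0)))
    (hd : ∀ l > 0, ∃ h', HasDerivAt h h' l ∧ l * |h'| ≤ D * h l) (ξ : F) :
    ∃ L : F →L[ℝ] F, HasFDerivAt (fun η : F => h ‖η‖ • η) L ξ ∧ ‖L‖ ≤ (D + 1) * h ‖ξ‖ := by
  by_cases hξ : ξ = 0
  · subst hξ
    refine ⟨h 0 • ContinuousLinearMap.id ℝ F, ?_, ?_⟩
    · have hc : Tendsto (fun η : F => h ‖η‖) (nhds 0) (nhds (h 0)) := by
        have h1 : Tendsto h (nhdsWithin 0 (Ici 0)) (nhds (h 0)) := by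
          rw [← Ioi_insert (a := (0:ℝ)), nhdsWithin_insert]
          exact (tendsto_pure_nhds h 0).sup h0
        refine h1.comp (tendsto_nhdsWithin_iff.2 ⟨?_, Eventually.of_forall fun η => norm_nonneg η⟩)
        simpa using (continuous_norm (E := F)).tendsto 0
      rw [hasFDerivAt_iff_isLittleO_nhds_zero]
      have h2 : (fun η : F => h ‖η‖ - h 0) =o[nhds 0] (fun _ : F => (1:ℝ)) := by
        rw [Asymptotics.isLittleO_one_iff]
        simpa using hc.sub_const (h 0)
      have h3 := h2.smul_isBigO (Asymptotics.isBigO_refl (fun η : F => η) (nhds 0))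
      refine (h3.congr ?_ ?_)
      · intro η; simp [sub_smul]
      · intro η; simp
    · simp only [norm_zero]
      have := hnn 0 le_rfl
      calc ‖h 0 • ContinuousLinearMap.id ℝ F‖ ≤ ‖h 0‖ * ‖ContinuousLinearMap.id ℝ F‖ :=
            ContinuousLinearMap.opNorm_smul_le _ _
        _ ≤ h 0 * 1 := by
            rw [Real.norm_of_nonneg this]
            gcongr
            exact ContinuousLinearMap.norm_id_le
        _ ≤ (D + 1) * h 0 := by nlinarith
  · have hpos : 0 < ‖ξ‖ := norm_pos_iff.2 hξ
    obtain ⟨h', hh', hb⟩ := hd ‖ξ‖ hpos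
    have hnorm : DifferentiableAt ℝ (fun η : F => ‖η‖) ξ :=
      (contDiffAt_norm ℝ hξ (n := 1)).differentiableAt (by norm_num)
    have hcomp := hh'.comp_hasFDerivAt ξ hnorm.hasFDerivAt
    have hL := hcomp.smul (hasFDerivAt_id (𝕜 := ℝ) ξ)
    refine ⟨_, hL, ?_⟩
    have hN : ‖fderiv ℝ (fun η : F => ‖η‖) ξ‖ ≤ 1 := by
      have := norm_fderiv_le_of_lipschitz ℝ (lipschitzWith_one_norm (E := F)) (x₀ := ξ)
      simpa using this
    have hhn := hnn ‖ξ‖ hpos.le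
    refine ContinuousLinearMap.opNorm_le_bound _ (by positivity) fun η => ?_
    have hNη : |fderiv ℝ (fun η : F => ‖η‖) ξ η| ≤ ‖η‖ := by
      have := (fderiv ℝ (fun η : F => ‖η‖) ξ).le_of_opNorm_le hN η
      simpa using this
    calc _ = ‖h ‖ξ‖ • η + (h' * fderiv ℝ (fun η : F => ‖η‖) ξ η) • ξ‖ := by simp
      _ ≤ ‖h ‖ξ‖ • η‖ + ‖(h' * fderiv ℝ (fun η : F => ‖η‖) ξ η) • ξ‖ := norm_add_le _ _
      _ = h ‖ξ‖ * ‖η‖ + ‖ξ‖ * |h'| * |fderiv ℝ (fun η : F => ‖η‖) ξ η| := by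
          rw [norm_smul, norm_smul, Real.norm_of_nonneg hhn, Real.norm_eq_abs, abs_mul]; ring
      _ ≤ h ‖ξ‖ * ‖η‖ + D * h ‖ξ‖ * ‖η‖ := by gcongr
      _ = (D + 1) * h ‖ξ‖ * ‖η‖ := by ring

lemma delta2_scale {M : ℝ → ℝ} (hM0 : M 0 = 0)
    (hmono : MonotoneOn M (Ici 0)) (hΔ : Delta2 M) (L : ℝ) (hL : 0 ≤ L) :
    ∃ C > 0, ∀ x ≥ 0, M (L * x) ≤ C * M x := by
  obtain ⟨c, hc, hΔ⟩ := hΔ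
  have hpow : ∀ k : ℕ, ∀ x ≥ 0, M (2 ^ k * x) ≤ c ^ k * M x := by
    intro k x hx
    induction k with
    | zero => simp
    | succ k ih =>
      rcases hx.eq_or_lt with rfl | hx0
      · simp [hM0]
      · calc M (2 ^ (k + 1) * x) = M (2 * (2 ^ k * x)) := by ring_nf
          _ ≤ c * M (2 ^ k * x) := hΔ _ (by positivity)
          _ ≤ c * (c ^ k * M x) := by gcongr
          _ = c ^ (k + 1) * M x := by ring
  obtain ⟨k, hk⟩ := pow_unbounded_of_one_lt L (one_lt_two)
  refine ⟨c ^ k, by positivity, fun x hx => (hmono ?_ ?_ ?_).trans (hpow k x hx)⟩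
  · exact mem_Ici.2 (by positivity)
  · exact mem_Ici.2 (by positivity)
  · gcongr

/-- A Young-type inequality for the profile `h(λ) = M(λ)/λ²`. If `v w ≤ ε a²` the left side is at
most `ε M(a)`; otherwise `a` is at most a multiple of `max v w` and `h` is monotone. -/
lemma young_profile {M h : ℝ → ℝ} (hmon : MonotoneOn h (Ici 0)) (hnn : ∀ x ≥ 0, 0 ≤ h x)
    (hMh : ∀ x ≥ 0, M x = h x * x ^ 2)
    (hsc : ∀ L ≥ (0:ℝ), ∃ C > 0, ∀ x ≥ 0, M (L * x) ≤ C * M x) (ε : ℝ) (hε : 0 < ε) :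
    ∃ C > 0, ∀ a ≥ 0, ∀ v ≥ 0, ∀ w ≥ 0, h a * (v * w) ≤ ε * M a + C * (M v + M w) := by
  obtain ⟨C, hC, hCs⟩ := hsc (1 / Real.sqrt ε) (by positivity)
  have hMnn : ∀ x ≥ 0, 0 ≤ M x := fun x hx => by
    rw [hMh x hx]; exact mul_nonneg (hnn x hx) (sq_nonneg x)
  have hs : Real.sqrt ε ^ 2 = ε := Real.sq_sqrt hε.le
  have hsp : 0 < Real.sqrt ε := Real.sqrt_pos.2 hε
  refine ⟨ε * C, by positivity, fun a ha v hv w hw => ?_⟩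
  have hv' := hMnn v hv
  have hw' := hMnn w hw
  by_cases hcase : v * w ≤ ε * a ^ 2
  · calc h a * (v * w) ≤ h a * (ε * a ^ 2) := by gcongr; exact hnn a ha
      _ = ε * M a := by rw [hMh a ha]; ring
      _ ≤ _ := by
        have : 0 ≤ ε * C * (M v + M w) := by positivity
        linarith
  · push Not at hcase
    set m := max v w with hm
    have hm0 : 0 ≤ m := le_max_of_le_left hv
    have hvm : v * w ≤ m ^ 2 := by
      rw [sq]; exact mul_le_mul (le_max_left _ _) (le_max_right _ _) hw hm0
    set s := 1 / Real.sqrt ε * m with hsd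
    have hs0 : 0 ≤ s := by positivity
    have hsm : ε * s ^ 2 = m ^ 2 := by
      rw [hsd, mul_pow, div_pow, hs]; field_simp
    have has : a ≤ s := by
      refine le_of_sq_le_sq ?_ hs0
      nlinarith
    calc h a * (v * w) ≤ h s * m ^ 2 := by
          refine mul_le_mul (hmon ha hs0 has) hvm (by positivity) (hnn s hs0)
      _ = ε * M s := by rw [hMh s hs0, ← hsm]; ring
      _ ≤ ε * (C * M m) := by gcongr; exact hCs m hm0
      _ ≤ ε * (C * (M v + M w)) := by
          gcongr
          rcases max_choice v w with h1 | h1 <;> rw [hm, h1] <;> linarith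
      _ ≤ ε * M a + ε * C * (M v + M w) := by
          have := hMnn a ha
          nlinarith

/-! ### Lipschitz functions -/

lemma lipAt_mul_exp {X : Type*} [PseudoMetricSpace X] {b p : X → ℝ} {x : X}
    (hb : ∃ K, ∃ t ∈ nhds x, LipschitzOnWith K b t)
    (hp : ∃ K, ∃ t ∈ nhds x, LipschitzOnWith K p t) :
    ∃ K, ∃ t ∈ nhds x, LipschitzOnWith K (fun y => b y * Real.exp (-p y)) t := by
  obtain ⟨K₁, t₁, ht₁, h₁⟩ := hb
  obtain ⟨K₂, t₂, ht₂, h₂⟩ := hp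
  have hH : LocallyLipschitz (fun z : ℝ × ℝ => z.1 * Real.exp (-z.2)) :=
    ContDiff.locallyLipschitz (𝕂 := ℝ) (by fun_prop)
  obtain ⟨K₃, t₃, ht₃, h₃⟩ := hH (b x, p x)
  have hc : ContinuousAt (fun y => (b y, p y)) x :=
    (h₁.continuousOn.continuousAt ht₁).prodMk (h₂.continuousOn.continuousAt ht₂)
  refine ⟨K₃ * max K₁ K₂, (t₁ ∩ t₂) ∩ (fun y => (b y, p y)) ⁻¹' t₃,
    inter_mem (inter_mem ht₁ ht₂) (hc.preimage_mem_nhds ht₃), ?_⟩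
  have h12 : LipschitzOnWith (max K₁ K₂) (fun y => (b y, p y))
      ((t₁ ∩ t₂) ∩ (fun y => (b y, p y)) ⁻¹' t₃) :=
    (h₁.mono fun y hy => hy.1.1).prodMk (h₂.mono fun y hy => hy.1.2)
  exact h₃.comp h12 fun y hy => hy.2

lemma lipschitz_of_hasCompactSupport {F : Type*} [NormedAddCommGroup F] [NormedSpace ℝ F]
    [ProperSpace F] {f : F → ℝ} (hf : LocallyLipschitz f) (hc : HasCompactSupport f) :
    ∃ K, LipschitzWith K f := by
  obtain ⟨R, hR⟩ := hc.isCompact.isBounded.subset_closedBall (0 : F)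
  obtain ⟨K, hK⟩ := (hf.locallyLipschitzOn
    (s := Metric.closedBall (0 : F) (R + 1))).exists_lipschitzOnWith_of_compact
      (isCompact_closedBall _ _)
  obtain ⟨B, hB⟩ := hc.exists_bound_of_continuous hf.continuous
  have hB0 : 0 ≤ B := (norm_nonneg _).trans (hB 0)
  have hz : ∀ x, R < ‖x‖ → f x = 0 := fun x hx => by
    refine image_eq_zero_of_notMem_tsupport fun h => ?_
    have := hR h
    rw [mem_closedBall_zero_iff] at this
    linarith
  -- The only case not covered by the ball of radius `R + 1`: the points are at distance `≥ 1`.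
  have key : ∀ x y : F, R + 1 < ‖y‖ → dist (f x) (f y) ≤ (max K B.toNNReal : NNReal) * dist x y := by
    intro x y hy
    have hm : B ≤ ((max K B.toNNReal : NNReal) : ℝ) := by
      rw [NNReal.coe_max]
      exact (Real.le_coe_toNNReal B).trans (le_max_right _ _)
    rw [hz y (by linarith)]
    by_cases hx : R < ‖x‖
    · rw [hz x hx, dist_self]; positivity
    · have h1 : 1 ≤ dist x y := by
        rw [dist_eq_norm, norm_sub_rev]
        have := norm_sub_norm_le y x
        push Not at hx
        linarith
      rw [dist_zero_right]
      calc ‖f x‖ ≤ B * 1 := by simpa using hB x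
        _ ≤ _ := by gcongr
  refine ⟨max K B.toNNReal, LipschitzWith.of_dist_le_mul fun x y => ?_⟩
  by_cases hy : R + 1 < ‖y‖
  · exact key x y hy
  by_cases hx : R + 1 < ‖x‖
  · rw [dist_comm (f x), dist_comm x]; exact key y x hx
  push Not at hx hy
  have := hK.dist_le_mul x (mem_closedBall_zero_iff.2 hx) y (mem_closedBall_zero_iff.2 hy)
  refine this.trans ?_
  gcongr
  exact le_max_left _ _

lemma field_locallyLipschitz {F : Type*} [NormedAddCommGroup F] [InnerProductSpace ℝ F]
    {h : ℝ → ℝ} {D : ℝ} (hD : 0 ≤ D) (hmon : MonotoneOn h (Ici 0)) (hnn : ∀ x ≥ 0, 0 ≤ h x)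
    (h0 : Tendsto h (nhdsWithin 0 (Ioi 0)) (nhds (h 0)))
    (hd : ∀ l > 0, ∃ h', HasDerivAt h h' l ∧ l * |h'| ≤ D * h l) :
    LocallyLipschitz (fun η : F => h ‖η‖ • η) := by
  intro ξ
  choose L hL hLn using field_hasFDerivAt (F := F) hD hnn h0 hd
  refine ⟨((D + 1) * h (‖ξ‖ + 1)).toNNReal, Metric.ball ξ 1, Metric.ball_mem_nhds ξ one_pos, ?_⟩
  refine (convex_ball ξ 1).lipschitzOnWith_of_nnnorm_hasFDerivWithin_le
    (fun η _ => (hL η).hasFDerivWithinAt) fun η hη => ?_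
  rw [← NNReal.coe_le_coe, coe_nnnorm]
  refine ((hLn η).trans ?_).trans (Real.le_coe_toNNReal _)
  have : ‖η‖ ≤ ‖ξ‖ + 1 := by
    have h1 := norm_sub_norm_le η ξ
    rw [mem_ball_iff_norm] at hη
    linarith
  gcongr
  exact hmon (norm_nonneg _) (mem_Ici.2 (by positivity)) this

/-! ### Gradient and Hessian -/

section Grad

variable {n : ℕ}

lemma gradient_apply {u : E n → ℝ} (x : E n) (i : Fin n) :
    gradient u x i = fderiv ℝ u x (EuclideanSpace.single i 1) := by
  have h : fderiv ℝ u x (EuclideanSpace.single i 1)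
      = inner ℝ (gradient u x) (EuclideanSpace.single i (1:ℝ)) := by
    rw [← InnerProductSpace.toDual_apply_apply, toDual_gradient]
  rw [h, EuclideanSpace.inner_single_right]
  simp

lemma gradient_contDiff {u : E n → ℝ} (hu : ContDiff ℝ (⊤ : ℕ∞) u) :
    ContDiff ℝ (⊤ : ℕ∞) (gradient u) := by
  have h1 : ContDiff ℝ (⊤ : ℕ∞) (fderiv ℝ u) := hu.fderiv_right (m := (⊤ : ℕ∞)) (by simp)
  exact ((InnerProductSpace.toDual ℝ (E n)).symm.contDiff).comp h1

lemma gradient_eq_zero {u : E n → ℝ} {x : E n} (hx : x ∉ tsupport u) : gradient u x = 0 := by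
  have : fderiv ℝ u x = 0 := by
    by_contra h
    exact hx (support_fderiv_subset ℝ h)
  rw [gradient, this, map_zero]

lemma hess_eq_zero {u : E n → ℝ} {x : E n} (hx : x ∉ tsupport u) : hessNormHS u x = 0 := by
  have : iteratedFDeriv ℝ 2 u x = 0 := by
    by_contra h
    exact hx (support_iteratedFDeriv_subset 2 h)
  simp [hessNormHS, this]

lemma hess_continuous {u : E n → ℝ} (hu : ContDiff ℝ (⊤ : ℕ∞) u) : Continuous (hessNormHS u) := by
  have h2 : Continuous (iteratedFDeriv ℝ 2 u) :=
    hu.continuous_iteratedFDeriv (WithTop.coe_le_coe.2 (le_top : (2 : ℕ∞) ≤ ⊤))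
  unfold hessNormHS
  fun_prop

lemma fderiv_gradient_apply {u : E n → ℝ} (hu : ContDiff ℝ (⊤ : ℕ∞) u) (x v : E n) (j : Fin n) :
    fderiv ℝ (gradient u) x v j = iteratedFDeriv ℝ 2 u x ![v, EuclideanSpace.single j 1] := by
  have hG : DifferentiableAt ℝ (gradient u) x :=
    (gradient_contDiff hu).differentiable (by simp) x
  have hF : DifferentiableAt ℝ (fderiv ℝ u) x :=
    (hu.fderiv_right (m := (⊤ : ℕ∞)) (by simp)).differentiable (by simp) x
  rw [iteratedFDeriv_two_apply]
  have h1 : HasFDerivAt (fun y => gradient u y j)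
      ((EuclideanSpace.proj j : E n →L[ℝ] ℝ).comp (fderiv ℝ (gradient u) x)) x :=
    (EuclideanSpace.proj j : E n →L[ℝ] ℝ).hasFDerivAt.comp x hG.hasFDerivAt
  have h2 : HasFDerivAt (fun y => fderiv ℝ u y (EuclideanSpace.single j 1))
      ((fderiv ℝ (fderiv ℝ u) x).flip (EuclideanSpace.single j 1)) x := by
    simpa using hF.hasFDerivAt.clm_apply (hasFDerivAt_const (EuclideanSpace.single j (1:ℝ)) x)
  simp_rw [gradient_apply] at h1
  have := congrArg (fun T => T v) (h1.unique h2)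
  simpa using this

lemma norm_fderiv_gradient_le {u : E n → ℝ} (hu : ContDiff ℝ (⊤ : ℕ∞) u) (x : E n) (i : Fin n) :
    ‖fderiv ℝ (gradient u) x (EuclideanSpace.single i 1)‖ ≤ hessNormHS u x := by
  rw [EuclideanSpace.norm_eq, hessNormHS]
  refine Real.sqrt_le_sqrt ?_
  simp_rw [fderiv_gradient_apply hu, Real.norm_eq_abs, sq_abs]
  exact Finset.single_le_sum (f := fun i => ∑ j : Fin n, (iteratedFDeriv ℝ 2 u x
    ![EuclideanSpace.single i (1:ℝ), EuclideanSpace.single j (1:ℝ)]) ^ 2)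
    (fun i _ => Finset.sum_nonneg fun j _ => sq_nonneg _) (Finset.mem_univ i)

lemma abs_gradient_apply_le (u : E n → ℝ) (x : E n) (i : Fin n) :
    |gradient u x i| ≤ ‖gradient u x‖ := by
  simpa using PiLp.norm_apply_le (gradient u x) i

lemma partial_testFun {Ω : Set (E n)} {u : E n → ℝ} (hu : TestFun Ω u) (t : ℝ) (i : Fin n) :
    TestFun Ω (fun x => t * gradient u x i) := by
  have hs : tsupport (fun x => t * gradient u x i) ⊆ tsupport u := by
    refine closure_minimal (fun x hx => ?_) (isClosed_tsupport u)
    by_contra h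
    exact hx (by simp [gradient_eq_zero h])
  refine ⟨?_, hu.2.1.of_isClosed_subset (isClosed_tsupport _) hs, hs.trans hu.2.2⟩
  have := gradient_contDiff hu.1
  fun_prop

lemma norm_gradient_partial_le {u : E n → ℝ} (hu : ContDiff ℝ (⊤ : ℕ∞) u) {t : ℝ} (ht : 0 ≤ t)
    (x : E n) (i : Fin n) :
    ‖gradient (fun y => t * gradient u y i) x‖ ≤ t * hessNormHS u x := by
  have hG : DifferentiableAt ℝ (gradient u) x :=
    (gradient_contDiff hu).differentiable (by simp) x
  have h1 : HasFDerivAt (fun y => t * gradient u y i)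
      (t • (EuclideanSpace.proj i : E n →L[ℝ] ℝ).comp (fderiv ℝ (gradient u) x)) x :=
    ((EuclideanSpace.proj i : E n →L[ℝ] ℝ).hasFDerivAt.comp x hG.hasFDerivAt).const_mul t
  have h2 : ∀ j, gradient (fun y => t * gradient u y i) x j = t * iteratedFDeriv ℝ 2 u x
      ![EuclideanSpace.single j (1:ℝ), EuclideanSpace.single i (1:ℝ)] := by
    intro j
    rw [gradient_apply, h1.fderiv, ← fderiv_gradient_apply hu]
    simp
  rw [EuclideanSpace.norm_eq, hessNormHS, ← Real.sqrt_sq ht, ← Real.sqrt_mul (sq_nonneg t),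
    Real.sqrt_sq ht]
  refine Real.sqrt_le_sqrt ?_
  simp_rw [h2, Real.norm_eq_abs, sq_abs, mul_pow, ← Finset.mul_sum]
  refine mul_le_mul_of_nonneg_left ?_ (sq_nonneg t)
  exact Finset.sum_le_sum fun k _ => Finset.single_le_sum (f := fun j => (iteratedFDeriv ℝ 2 u x
    ![EuclideanSpace.single k (1:ℝ), EuclideanSpace.single j (1:ℝ)]) ^ 2)
    (fun j _ => sq_nonneg _) (Finset.mem_univ i)

end Grad

/-! ### The weighted measure -/

section Meas

variable {n : ℕ} {Ω : Set (E n)} {φ : E n → ℝ}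

lemma lipAt_of_locLipschitzOn (hΩ : IsOpen Ω) (hφ : LocLipschitzOn Ω φ) {x : E n} (hx : x ∈ Ω) :
    ∃ K, ∃ t ∈ nhds x, LipschitzOnWith K φ t := by
  obtain ⟨s, hs, K, hK⟩ := hφ x hx
  rw [hΩ.nhdsWithin_eq hx] at hs
  exact ⟨K, s, hs, hK⟩

lemma continuousOn_of_locLipschitzOn (hΩ : IsOpen Ω) (hφ : LocLipschitzOn Ω φ) :
    ContinuousOn φ Ω := fun x hx => by
  obtain ⟨K, t, ht, hK⟩ := lipAt_of_locLipschitzOn hΩ hφ hx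
  exact (hK.continuousOn.continuousAt ht).continuousWithinAt

lemma integral_measOf (hΩ : IsOpen Ω) (hφ : LocLipschitzOn Ω φ) (f : E n → ℝ) :
    ∫ x, f x ∂(measOf Ω φ) = ∫ x in Ω, Real.exp (-φ x) * f x := by
  have hm : AEMeasurable (fun x => ENNReal.ofReal (Real.exp (-φ x))) (volume.restrict Ω) := by
    have := (continuousOn_of_locLipschitzOn hΩ hφ).aemeasurable (μ := volume) hΩ.measurableSet
    fun_prop
  rw [measOf, integral_withDensity_eq_integral_toReal_smul₀ hm
    (Eventually.of_forall fun x => ENNReal.ofReal_lt_top)]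
  refine integral_congr_ae (Eventually.of_forall fun x => ?_)
  simp [ENNReal.toReal_ofReal (Real.exp_pos _).le]

lemma measOf_compact_lt_top (hΩ : IsOpen Ω) (hφ : LocLipschitzOn Ω φ) {K : Set (E n)}
    (hK : IsCompact K) (hKΩ : K ⊆ Ω) : measOf Ω φ K < ⊤ := by
  have hc : ContinuousOn (fun x => Real.exp (-φ x)) K :=
    (Real.continuous_exp.comp continuous_neg).comp_continuousOn
      ((continuousOn_of_locLipschitzOn hΩ hφ).mono hKΩ)
  obtain ⟨B, hB⟩ := hK.exists_bound_of_continuousOn hc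
  rw [measOf, withDensity_apply _ hK.measurableSet]
  calc _ ≤ ∫⁻ x in K, ENNReal.ofReal B ∂(volume.restrict Ω) := by
        refine setLIntegral_mono measurable_const fun x hx => ?_
        exact ENNReal.ofReal_le_ofReal ((le_abs_self _).trans (hB x hx))
    _ = ENNReal.ofReal B * (volume.restrict Ω) K := by rw [setLIntegral_const]
    _ < ⊤ := ENNReal.mul_lt_top ENNReal.ofReal_lt_top
        ((Measure.restrict_apply_le _ _).trans_lt hK.measure_lt_top)

lemma integrable_measOf (hΩ : IsOpen Ω) (hφ : LocLipschitzOn Ω φ) {K : Set (E n)}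
    (hK : IsCompact K) (hKΩ : K ⊆ Ω) {f : E n → ℝ} (hf : AEStronglyMeasurable f (measOf Ω φ))
    (hz : ∀ x, x ∉ K → f x = 0) {B : ℝ} (hB : ∀ᵐ x ∂(measOf Ω φ), x ∈ K → ‖f x‖ ≤ B) :
    Integrable f (measOf Ω φ) := by
  rw [← integrableOn_iff_integrable_of_support_subset (s := K)]
  · exact Measure.integrableOn_of_bounded (measOf_compact_lt_top hΩ hφ hK hKΩ).ne hf
      ((ae_restrict_iff' hK.measurableSet).2 hB)
  · intro x hx
    by_contra h
    exact hx (hz x h)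

lemma integrable_measOf_continuous (hΩ : IsOpen Ω) (hφ : LocLipschitzOn Ω φ) {K : Set (E n)}
    (hK : IsCompact K) (hKΩ : K ⊆ Ω) {f : E n → ℝ} (hf : Continuous f)
    (hz : ∀ x, x ∉ K → f x = 0) : Integrable f (measOf Ω φ) := by
  obtain ⟨B, hB⟩ := hK.exists_bound_of_continuousOn hf.continuousOn
  exact integrable_measOf hΩ hφ hK hKΩ hf.aestronglyMeasurable hz
    (Eventually.of_forall fun x hx => hB x hx)

/-- Gradients of a locally Lipschitz function are bounded on compact sets. -/
lemma gradient_bound (hΩ : IsOpen Ω) (hφ : LocLipschitzOn Ω φ) {K : Set (E n)}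
    (hK : IsCompact K) (hKΩ : K ⊆ Ω) :
    ∃ B : ℝ, ∀ x ∈ K, ∀ g, HasGradientAt φ g x → ‖g‖ ≤ B := by
  refine hK.induction_on (p := fun s => ∃ B : ℝ, ∀ x ∈ s, ∀ g, HasGradientAt φ g x → ‖g‖ ≤ B)
    ⟨0, by simp⟩ ?_ ?_ ?_
  · rintro s t hst ⟨B, hB⟩
    exact ⟨B, fun x hx => hB x (hst hx)⟩
  · rintro s t ⟨B, hB⟩ ⟨B', hB'⟩
    refine ⟨max B B', ?_⟩
    rintro x (hx | hx) g hg
    · exact (hB x hx g hg).trans (le_max_left _ _)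
    · exact (hB' x hx g hg).trans (le_max_right _ _)
  · intro x hx
    obtain ⟨L, t, ht, hL⟩ := lipAt_of_locLipschitzOn hΩ hφ (hKΩ hx)
    obtain ⟨t', ht't, ht'o, hxt'⟩ := mem_nhds_iff.1 ht
    refine ⟨t', mem_nhdsWithin_of_mem_nhds (ht'o.mem_nhds hxt'), L, fun y hy g hg => ?_⟩
    have := HasFDerivAt.le_of_lipschitzOn hg.hasFDerivAt (ht'o.mem_nhds hy) (hL.mono ht't)
    simpa using this

end Meas

/-! ### Integration by parts -/

/-- Integration by parts for the `i`-th component of `A(∇u) e^{-φ}`, where `A(ξ) = h(|ξ|) ξ`: this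
product is Lipschitz with compact support, and it is differentiable almost everywhere on `Ω`. -/
lemma partial_ibp {n : ℕ} {Ω : Set (E n)} (hΩ : IsOpen Ω) {φ : E n → ℝ}
    (hφ : LocLipschitzOn Ω φ) {φ' : E n → E n}
    (hφ' : ∀ᵐ x ∂(volume.restrict Ω), HasGradientAt φ (φ' x) x)
    {h : ℝ → ℝ} {D : ℝ} (hD : 0 ≤ D) (hmon : MonotoneOn h (Ici 0)) (hnn : ∀ x ≥ 0, 0 ≤ h x)
    (h0 : Tendsto h (nhdsWithin 0 (Ioi 0)) (nhds (h 0)))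
    (hd : ∀ l > 0, ∃ h', HasDerivAt h h' l ∧ l * |h'| ≤ D * h l)
    {u : E n → ℝ} (hu : TestFun Ω u) (i : Fin n) {g : E n → ℝ}
    (hg : Integrable g (measOf Ω φ))
    (hgb : ∀ᵐ x ∂(measOf Ω φ), h ‖gradient u x‖ *
      ((D + 1) * hessNormHS u x + |gradient u x i| * ‖φ' x‖) * |u x| ≤ g x) :
    ∫ x, h ‖gradient u x‖ * gradient u x i ^ 2 ∂(measOf Ω φ) ≤ ∫ x, g x ∂(measOf Ω φ) := by
  set e : E n := EuclideanSpace.single i 1 with he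
  have hG := gradient_contDiff hu.1
  have hGd : Differentiable ℝ (gradient u) := hG.differentiable (by simp)
  set b : E n → ℝ := fun x => h ‖gradient u x‖ * gradient u x i with hb
  have hblip : LocallyLipschitz b :=
    (EuclideanSpace.proj i : E n →L[ℝ] ℝ).lipschitz.locallyLipschitz.comp
      ((field_locallyLipschitz hD hmon hnn h0 hd).comp
        ((hG.of_le (by simp)).locallyLipschitz (𝕂 := ℝ)))
  have hbz : ∀ x, x ∉ tsupport u → b x = 0 := fun x hx => by simp [hb, gradient_eq_zero hx]
  set F : E n → ℝ := fun x => b x * Real.exp (-φ x) with hF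
  have hFz : ∀ x, x ∉ tsupport u → F x = 0 := fun x hx => by simp [hF, hbz x hx]
  have hFloc : LocallyLipschitz F := by
    intro x
    by_cases hx : x ∈ tsupport u
    · exact lipAt_mul_exp (hblip x) (lipAt_of_locLipschitzOn hΩ hφ (hu.2.2 hx))
    · refine ⟨0, (tsupport u)ᶜ, (isClosed_tsupport u).isOpen_compl.mem_nhds hx, ?_⟩
      refine LipschitzOnWith.of_dist_le_mul fun y hy z hz => ?_
      simp [hFz y hy, hFz z hz]
  have hFc : HasCompactSupport F := HasCompactSupport.intro hu.2.1.isCompact hFz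
  obtain ⟨KF, hFlip⟩ := lipschitz_of_hasCompactSupport hFloc hFc
  obtain ⟨Ku, hulip⟩ := hu.1.lipschitzWith_of_hasCompactSupport hu.2.1 (by simp)
  have hibp := hulip.integral_lineDeriv_mul_eq (μ := volume) hFlip hFc e
  have hux : ∀ x, x ∉ Ω → u x = 0 := fun x hx =>
    image_eq_zero_of_notMem_tsupport fun h => hx (hu.2.2 h)
  have hL : ∫ x, lineDeriv ℝ u x e * F x
      = ∫ x, h ‖gradient u x‖ * gradient u x i ^ 2 ∂(measOf Ω φ) := by
    rw [integral_measOf hΩ hφ, ← setIntegral_eq_integral_of_forall_compl_eq_zero (s := Ω)]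
    · refine integral_congr_ae (Eventually.of_forall fun x => ?_)
      have : lineDeriv ℝ u x e = gradient u x i := by
        rw [gradient_apply]
        exact (hu.1.differentiable (by simp) x).lineDeriv_eq_fderiv
      simp only [this, hF, hb]
      ring
    · intro x hx
      rw [hFz x fun h => hx (hu.2.2 h), mul_zero]
  have hR : ∫ x, lineDeriv ℝ F x (-e) * u x
      = ∫ x, Real.exp (φ x) * (lineDeriv ℝ F x (-e) * u x) ∂(measOf Ω φ) := by
    rw [integral_measOf hΩ hφ, ← setIntegral_eq_integral_of_forall_compl_eq_zero (s := Ω)]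
    · refine integral_congr_ae (Eventually.of_forall fun x => ?_)
      simp only
      rw [← mul_assoc, ← Real.exp_add]
      simp
    · intro x hx
      rw [hux x hx, mul_zero]
  rw [← hL, hibp, hR]
  refine (Real.le_norm_self _).trans (norm_integral_le_of_norm_le hg ?_)
  have hae : ∀ᵐ x ∂(measOf Ω φ), HasGradientAt φ (φ' x) x :=
    (withDensity_absolutelyContinuous _ _) hφ'
  filter_upwards [hae, hgb] with x hx hgx
  refine le_trans ?_ hgx
  obtain ⟨L, hLd, hLn⟩ := field_hasFDerivAt (F := E n) hD hnn h0 hd (gradient u x)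
  have hbd : HasFDerivAt b ((EuclideanSpace.proj i : E n →L[ℝ] ℝ).comp
      (L.comp (fderiv ℝ (gradient u) x))) x :=
    (EuclideanSpace.proj i : E n →L[ℝ] ℝ).hasFDerivAt.comp x
      (hLd.comp x (hGd x).hasFDerivAt)
  have hFd := hbd.mul (hx.hasFDerivAt.neg.exp)
  have hline : lineDeriv ℝ F x (-e)
      = Real.exp (-φ x) * (b x * φ' x i - L (fderiv ℝ (gradient u) x e) i) := by
    have h1 : lineDeriv ℝ F x (-e) = _ := (hFd.hasLineDerivAt (-e)).lineDeriv
    have h2 : inner ℝ (φ' x) e = φ' x i := by simp [he, EuclideanSpace.inner_single_right]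
    rw [h1]
    simp [h2]
    ring
  have hcancel : Real.exp (φ x) * Real.exp (-φ x) = 1 := by rw [← Real.exp_add]; simp
  rw [hline, mul_assoc (Real.exp (-φ x)), ← mul_assoc, hcancel, one_mul, norm_mul,
    Real.norm_eq_abs, Real.norm_eq_abs]
  refine mul_le_mul_of_nonneg_right ?_ (abs_nonneg _)
  have hh := hnn ‖gradient u x‖ (norm_nonneg _)
  have hφi : |φ' x i| ≤ ‖φ' x‖ := by simpa using PiLp.norm_apply_le (φ' x) i
  have hLe : |L (fderiv ℝ (gradient u) x e) i| ≤ (D + 1) * h ‖gradient u x‖ * hessNormHS u x := by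
    calc _ ≤ ‖L (fderiv ℝ (gradient u) x e)‖ := by simpa using PiLp.norm_apply_le (L _) i
      _ ≤ ‖L‖ * ‖fderiv ℝ (gradient u) x e‖ := L.le_opNorm _
      _ ≤ _ := by
        gcongr
        exact norm_fderiv_gradient_le hu.1 x i
  calc _ ≤ |b x * φ' x i| + |L (fderiv ℝ (gradient u) x e) i| := abs_sub _ _
    _ ≤ h ‖gradient u x‖ * |gradient u x i| * ‖φ' x‖
        + (D + 1) * h ‖gradient u x‖ * hessNormHS u x := by
        rw [abs_mul, hb, abs_mul, abs_of_nonneg hh]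
        gcongr
    _ = _ := by ring

lemma integrable_hardy {n : ℕ} {Ω : Set (E n)} (hΩ : IsOpen Ω) {φ : E n → ℝ}
    (hφ : LocLipschitzOn Ω φ) {φ' : E n → E n}
    (hφ' : ∀ᵐ x ∂(volume.restrict Ω), HasGradientAt φ (φ' x) x)
    {M : ℝ → ℝ} (hMc : ContinuousOn M (Ici 0)) (hM0 : M 0 = 0) (hMnn : ∀ x ≥ 0, 0 ≤ M x)
    (hMm : MonotoneOn M (Ici 0)) {K : Set (E n)} (hK : IsCompact K) (hKΩ : K ⊆ Ω)
    {v : E n → ℝ} (hv : Continuous v) (hz : ∀ x, x ∉ K → v x = 0) :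
    Integrable (fun x => M (‖φ' x‖ * |v x|)) (measOf Ω φ) := by
  have hae : ∀ᵐ x ∂(measOf Ω φ), HasGradientAt φ (φ' x) x :=
    (withDensity_absolutelyContinuous _ _) hφ'
  obtain ⟨B, hB⟩ := gradient_bound hΩ hφ hK hKΩ
  obtain ⟨V, hV⟩ := hK.exists_bound_of_continuousOn hv.continuousOn
  have hmeas : AEStronglyMeasurable (fun x => M (‖φ' x‖ * |v x|)) (measOf Ω φ) := by
    -- `φ'` need not be measurable, but it agrees almost everywhere with the measurable `fderiv ℝ φ`.
    have hMa : Continuous fun y : ℝ => M |y| :=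
      hMc.comp_continuous continuous_abs fun y => abs_nonneg y
    have h1 : Measurable fun x => ‖fderiv ℝ φ x‖ * |v x| :=
      (measurable_fderiv ℝ φ).norm.mul hv.abs.measurable
    refine ((hMa.measurable.comp h1).aestronglyMeasurable).congr ?_
    filter_upwards [hae] with x hx
    have h2 : ‖fderiv ℝ φ x‖ = ‖φ' x‖ := by
      rw [hx.hasFDerivAt.fderiv, LinearIsometryEquiv.norm_map]
    simp only [Function.comp, h2]
    rw [abs_of_nonneg (by positivity)]
  refine integrable_measOf hΩ hφ hK hKΩ hmeas (fun x hx => by simp [hz x hx, hM0])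
    (B := M (B * V)) ?_
  filter_upwards [hae] with x hx hxK
  have h1 := hB x hxK _ hx
  have h2 : |v x| ≤ V := hV x hxK
  have h3 : 0 ≤ B := (norm_nonneg _).trans h1
  have h4 : 0 ≤ V := (abs_nonneg _).trans h2
  rw [Real.norm_of_nonneg (hMnn _ (by positivity))]
  refine hMm (mem_Ici.2 (by positivity)) (mem_Ici.2 (by positivity)) ?_
  gcongr

/-! ### The modular inequality -/

/-- Theorem 3.7(1): the case `P = Q = M`; the Hardy-type inequality for `M` implies
the modular Gagliardo–Nirenberg inequality for `M`. -/
theorem statement5 {n : ℕ} (Ω : Set (E n)) (hΩ : IsOpen Ω)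
    (M : ℝ → ℝ) (hM : CondM M)
    (hmono : MonotoneOn (fun l => M l / l ^ 2) (Ioi 0))
    (φ : E n → ℝ) (hφ : LocLipschitzOn Ω φ) (φ' : E n → E n)
    (hφ' : ∀ᵐ x ∂(volume.restrict Ω), HasGradientAt φ (φ' x) x)
    (K₁ K₂ : ℝ) (hK₁ : 0 < K₁) (hK₂ : 0 < K₂)
    (hH1 : ∀ u : E n → ℝ, TestFun Ω u →
      ∫ x, M (‖φ' x‖ * |u x|) ∂(measOf Ω φ) ≤
        K₁ * ∫ x, M ‖gradient u x‖ ∂(measOf Ω φ)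
          + K₂ * ∫ x, M |u x| ∂(measOf Ω φ)) :
    ∃ C₁ > (0:ℝ), ∃ C₂ > (0:ℝ), ∀ θ ∈ Ioc (0:ℝ) 1, ∀ u : E n → ℝ, TestFun Ω u →
      ∫ x, M ‖gradient u x‖ ∂(measOf Ω φ) ≤
        C₁ * ∫ x, M (θ * hessNormHS u x) ∂(measOf Ω φ)
          + C₂ * ∫ x, M (|u x| / θ) ∂(measOf Ω φ) := by
  obtain ⟨h, D, hD, hmon, hnn, hMh, h0, hd⟩ := exists_profile hM hmono
  obtain ⟨⟨hMc, -, hM0, hMnn, -, -⟩, -, hΔ, -⟩ := hM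
  have hMm : MonotoneOn M (Ici 0) := by
    intro x hx y hy hxy
    rw [hMh x hx, hMh y hy]
    exact mul_le_mul (hmon hx hy hxy) (pow_le_pow_left₀ hx hxy 2) (sq_nonneg _) (hnn y hy)
  have hsc := delta2_scale hM0 hMm hΔ
  set N : ℝ := (n : ℝ) with hN
  have hN0 : 0 ≤ N := Nat.cast_nonneg n
  -- With `ε` and `δ` chosen this way, the multiples of `∫ M(|∇u|) dμ` produced on the right by
  -- Young's inequality and by the Hardy inequality have total coefficient at most `1 / 2`.
  set ε : ℝ := 1 / (4 * (N + 1) * (D + 2)) with hεd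
  have hε : 0 < ε := by positivity
  obtain ⟨C, hC, hY⟩ := young_profile hmon hnn hMh hsc ε hε
  set δ : ℝ := 1 / (1 + 4 * (N + 1) * (C * K₂)) with hδd
  have hδ : 0 < δ := by positivity
  have hδ1 : δ ≤ 1 := by
    rw [hδd, div_le_one (by positivity)]
    have : 0 ≤ 4 * (N + 1) * (C * K₂) := by positivity
    linarith
  have hεN : N * ((D + 2) * ε) ≤ 1 / 4 := by
    have : N * ((D + 2) * ε) = N / (N + 1) / 4 := by rw [hεd]; field_simp
    rw [this]
    have : N / (N + 1) ≤ 1 := (div_le_one (by positivity)).2 (by linarith)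
    linarith
  have hδN : N * (C * (K₂ * δ)) ≤ 1 / 4 := by
    have : N * (C * (K₂ * δ)) = (N * (C * K₂)) / (1 + 4 * (N + 1) * (C * K₂)) := by
      rw [hδd]; ring
    rw [this, div_le_iff₀ (by positivity)]
    have : 0 < C * K₂ := by positivity
    nlinarith
  obtain ⟨Cδ, hCδ, hCδs⟩ := hsc (1 / δ) (by positivity)
  refine ⟨2 * (N + 1) * ((D + 1) * C + C * K₁), by positivity,
    2 * (N + 1) * ((D + 2) * C * Cδ), by positivity, fun θ hθ u hu => ?_⟩
  obtain ⟨hθ0, hθ1⟩ := hθ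
  set K := tsupport u with hKd
  have hK : IsCompact K := hu.2.1.isCompact
  have hKΩ : K ⊆ Ω := hu.2.2
  have hG := gradient_contDiff hu.1
  have hHc := hess_continuous hu.1
  have hH0 : ∀ x, 0 ≤ hessNormHS u x := fun x => Real.sqrt_nonneg _
  have hint : ∀ f : E n → ℝ, Continuous f → (∀ x, 0 ≤ f x) → (∀ x, x ∉ K → f x = 0) →
      Integrable (fun x => M (f x)) (measOf Ω φ) := fun f hf hf0 hz =>
    integrable_measOf_continuous hΩ hφ hK hKΩ (hMc.comp_continuous hf hf0)
      fun x hx => by simp [hz x hx, hM0]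
  have iX : Integrable (fun x => M ‖gradient u x‖) (measOf Ω φ) :=
    hint _ hG.continuous.norm (fun x => norm_nonneg _) fun x hx => by simp [gradient_eq_zero hx]
  have iH : ∀ t : ℝ, 0 ≤ t → Integrable (fun x => M (t * hessNormHS u x)) (measOf Ω φ) :=
    fun t ht => hint _ (hHc.const_mul t) (fun x => mul_nonneg ht (hH0 x))
      fun x hx => by simp [hess_eq_zero hx]
  have iW : ∀ t : ℝ, 0 ≤ t → Integrable (fun x => M (|u x| / t)) (measOf Ω φ) :=
    fun t ht => hint _ (hu.1.continuous.abs.div_const t)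
      (fun x => div_nonneg (abs_nonneg _) ht)
      fun x hx => by simp [image_eq_zero_of_notMem_tsupport hx]
  have hδθ : 0 < δ * θ := by positivity
  set X := ∫ x, M ‖gradient u x‖ ∂(measOf Ω φ) with hX
  set Y := ∫ x, M (θ * hessNormHS u x) ∂(measOf Ω φ) with hYd
  set W := ∫ x, M (|u x| / θ) ∂(measOf Ω φ) with hW
  have hX0 : 0 ≤ X := integral_nonneg fun x => hMnn _ (norm_nonneg _)
  have hY0 : 0 ≤ Y := integral_nonneg fun x => hMnn _ (mul_nonneg hθ0.le (hH0 x))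
  have hW0 : 0 ≤ W := integral_nonneg fun x => hMnn _ (div_nonneg (abs_nonneg _) hθ0.le)
  have hYδ : ∫ x, M (δ * θ * hessNormHS u x) ∂(measOf Ω φ) ≤ Y := by
    refine integral_mono (iH _ hδθ.le) (iH _ hθ0.le) fun x => ?_
    have := hH0 x
    refine hMm (mem_Ici.2 (by positivity)) (mem_Ici.2 (by positivity)) ?_
    calc δ * θ * hessNormHS u x = δ * (θ * hessNormHS u x) := by ring
      _ ≤ 1 * (θ * hessNormHS u x) := by gcongr
      _ = _ := one_mul _
  have hWδ : ∫ x, M (|u x| / (δ * θ)) ∂(measOf Ω φ) ≤ Cδ * W := by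
    rw [hW, ← integral_const_mul]
    refine integral_mono (iW _ hδθ.le) ((iW _ hθ0.le).const_mul _) fun x => ?_
    have := hCδs (|u x| / θ) (by positivity)
    have e : |u x| / (δ * θ) = 1 / δ * (|u x| / θ) := by field_simp
    simp only [e]
    exact this
  have hpart : ∀ i : Fin n, ∫ x, h ‖gradient u x‖ * gradient u x i ^ 2 ∂(measOf Ω φ) ≤
      (D + 2) * ε * X + C * (K₂ * δ) * X + ((D + 1) * C + C * K₁) * Y
        + (D + 2) * C * Cδ * W := by
    intro i
    set v : E n → ℝ := fun x => δ * θ * gradient u x i with hv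
    have hvT : TestFun Ω v := partial_testFun hu (δ * θ) i
    have hvz : ∀ x, x ∉ K → v x = 0 := fun x hx => by simp [hv, gradient_eq_zero hx]
    have iΦ := integrable_hardy hΩ hφ hφ' hMc hM0 hMnn hMm hK hKΩ hvT.1.continuous hvz
    have iv : Integrable (fun x => M |v x|) (measOf Ω φ) :=
      hint _ hvT.1.continuous.abs (fun x => abs_nonneg _) fun x hx => by simp [hvz x hx]
    have igv : Integrable (fun x => M ‖gradient v x‖) (measOf Ω φ) := by
      refine hint _ (gradient_contDiff hvT.1).continuous.norm (fun x => norm_nonneg _)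
        fun x hx => ?_
      refine le_antisymm ?_ (norm_nonneg _)
      have := norm_gradient_partial_le hu.1 hδθ.le x i
      rwa [hess_eq_zero hx, mul_zero] at this
    have hΦ : ∫ x, M (‖φ' x‖ * |v x|) ∂(measOf Ω φ) ≤ K₁ * Y + K₂ * (δ * X) := by
      refine (hH1 v hvT).trans (add_le_add ?_ ?_)
      · refine mul_le_mul_of_nonneg_left (le_trans ?_ hYδ) hK₁.le
        refine integral_mono igv (iH _ hδθ.le) fun x => ?_
        have := hH0 x
        exact hMm (norm_nonneg _) (mem_Ici.2 (by positivity))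
          (norm_gradient_partial_le hu.1 hδθ.le x i)
      · refine mul_le_mul_of_nonneg_left ?_ hK₂.le
        rw [hX, ← integral_const_mul]
        refine integral_mono iv (iX.const_mul _) fun x => ?_
        have ha := norm_nonneg (gradient u x)
        have h1 : |v x| ≤ δ * ‖gradient u x‖ := by
          rw [hv, abs_mul, abs_of_pos hδθ]
          have := abs_gradient_apply_le u x i
          calc δ * θ * |gradient u x i| ≤ δ * 1 * ‖gradient u x‖ := by gcongr
            _ = _ := by ring
        have h2 : δ * ‖gradient u x‖ ≤ ‖gradient u x‖ := mul_le_of_le_one_left ha hδ1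
        have hh := hnn _ ha
        calc M |v x| ≤ M (δ * ‖gradient u x‖) :=
              hMm (mem_Ici.2 (abs_nonneg _)) (mem_Ici.2 (by positivity)) h1
          _ = h (δ * ‖gradient u x‖) * (δ * ‖gradient u x‖) ^ 2 := hMh _ (by positivity)
          _ ≤ h ‖gradient u x‖ * (δ * ‖gradient u x‖ ^ 2) := by
              refine mul_le_mul (hmon (mem_Ici.2 (by positivity)) ha h2) ?_ (sq_nonneg _) hh
              rw [mul_pow]
              gcongr
              nlinarith
          _ = δ * M ‖gradient u x‖ := by rw [hMh _ ha]; ring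
    have i1 := iX.const_mul ((D + 2) * ε)
    have i2 := (iH _ hδθ.le).const_mul ((D + 1) * C)
    have i3 := (iW _ hδθ.le).const_mul ((D + 2) * C)
    have i4 := iΦ.const_mul C
    have i12 := i1.add i2
    have i123 := i12.add i3
    have i1234 := i123.add i4
    have hmain := partial_ibp hΩ hφ hφ' hD hmon hnn h0 hd hu i i1234 ?_
    · rw [integral_add' i123 i4, integral_add' i12 i3, integral_add' i1 i2,
        integral_const_mul, integral_const_mul, integral_const_mul, integral_const_mul] at hmain
      have e2 := mul_le_mul_of_nonneg_left hYδ (by positivity : 0 ≤ (D + 1) * C)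
      have e3 := mul_le_mul_of_nonneg_left hWδ (by positivity : 0 ≤ (D + 2) * C)
      have e4 := mul_le_mul_of_nonneg_left hΦ hC.le
      linarith
    · refine Eventually.of_forall fun x => ?_
      simp only [Pi.add_apply]
      have ha := norm_nonneg (gradient u x)
      have hHx := hH0 x
      -- The factor `|u|` is traded for `|u| / (δθ)` against a factor `δθ` on the derivatives.
      have y1 := hY ‖gradient u x‖ ha (δ * θ * hessNormHS u x) (by positivity)
        (|u x| / (δ * θ)) (by positivity)
      have y2 := hY ‖gradient u x‖ ha (‖φ' x‖ * |v x|) (by positivity)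
        (|u x| / (δ * θ)) (by positivity)
      have r1 : δ * θ * hessNormHS u x * (|u x| / (δ * θ)) = hessNormHS u x * |u x| := by
        field_simp
      have r2 : ‖φ' x‖ * |v x| * (|u x| / (δ * θ)) = |gradient u x i| * ‖φ' x‖ * |u x| := by
        rw [hv, abs_mul, abs_of_pos hδθ]; field_simp
      rw [r1] at y1
      rw [r2] at y2
      have y1' := mul_le_mul_of_nonneg_left y1 (by positivity : 0 ≤ D + 1)
      linarith
  have hsum : X = ∑ i : Fin n, ∫ x, h ‖gradient u x‖ * gradient u x i ^ 2 ∂(measOf Ω φ) := by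
    have hcoord : ∀ x (i : Fin n), h ‖gradient u x‖ * gradient u x i ^ 2
        = h ‖gradient u x‖ * gradient u x i * gradient u x i := fun x i => by ring
    rw [← integral_finsetSum]
    · refine integral_congr_ae (Eventually.of_forall fun x => ?_)
      simp only
      rw [hMh _ (norm_nonneg _), EuclideanSpace.real_norm_sq_eq, Finset.mul_sum]
    · intro i _
      have hA := (field_locallyLipschitz (F := E n) hD hmon hnn h0 hd).continuous.comp hG.continuous
      have hAi : Continuous fun x => h ‖gradient u x‖ * gradient u x i :=
        (EuclideanSpace.proj i : E n →L[ℝ] ℝ).continuous.comp hA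
      have hGi : Continuous fun x => gradient u x i :=
        (EuclideanSpace.proj i : E n →L[ℝ] ℝ).continuous.comp hG.continuous
      refine integrable_measOf_continuous hΩ hφ hK hKΩ ?_ fun x hx => by simp [gradient_eq_zero hx]
      simp_rw [hcoord]
      exact hAi.mul hGi
  have hle : X ≤ N * ((D + 2) * ε * X + C * (K₂ * δ) * X + ((D + 1) * C + C * K₁) * Y
        + (D + 2) * C * Cδ * W) := by
    calc X ≤ ∑ _i : Fin n, _ := hsum.trans_le (Finset.sum_le_sum fun i _ => hpart i)
      _ = _ := by rw [Finset.sum_const, Finset.card_univ, Fintype.card_fin, nsmul_eq_mul]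
  have f1 := mul_le_mul_of_nonneg_right hεN hX0
  have f2 := mul_le_mul_of_nonneg_right hδN hX0
  have f3 : 0 ≤ ((D + 1) * C + C * K₁) * Y := by positivity
  have f4 : 0 ≤ (D + 2) * C * Cδ * W := by positivity
  linarith
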